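/- Let f = h + conj(g) be harmonic on the unit disk with h, g analytic, g(0) = 0, and f in the harmonic Hardy space h². Then ∫_{-1}^{1} |f(x)|² dx ≤ (1/2) ∫₀^{2π} |f(e^{iθ})|² dθ + ∫₀^{2π} |h(e^{iθ}) g(e^{iθ})| dθ. -/

import Mathlib

open Complex MeasureTheory Real Filter

/-!
Since `|h + conj g|² = |h|² + |g|² + 2 Re (h g)`, the inequality is the sum of the Riesz–Fejér
inequality for `h` and `g` in `H²` and for `h g` in `H¹`; on the circle the cross term integrates
to `4 π Re (h 0 * g 0)` by the mean value property. On a disc of radius `r < 1` the Riesz–Fejér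
inequality for `H¹` is Cauchy's theorem for the two half discs, and the one for `H²` follows by
applying it to `φ(z) conj (φ(conj z))`.

To reach `r = 1`, let `M(r)` be the integral of `|φ|²` over the circle of radius `r`. By Parseval,
the squared `L²` distance between the dilates `φ_r` and `φ_s`, `s ≤ r`, is at most `M(r) - M(s)`.
So `M` is monotone, and when it is bounded Fatou's lemma shows that the dilates converge in `L²` to
the radial limit of `φ`.
-/

open scoped ENNReal Topology ComplexConjugate

section L2

variable {α ι E F : Type*} [MeasurableSpace α] {μ : Measure α} [NormedAddCommGroup E]
  [NormedAddCommGroup F]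

theorem memLp_restrict_of_isCompact {X : Type*} [TopologicalSpace X] [T2Space X]
    [MeasurableSpace X] [OpensMeasurableSpace X] {μ : Measure X} [IsFiniteMeasureOnCompacts μ]
    {u : X → E} {K : Set X} (hu : ContinuousOn u K) (hK : IsCompact K) {p : ℝ≥0∞} :
    MemLp u p (μ.restrict K) := by
  have : IsFiniteMeasure (μ.restrict K) := isFiniteMeasure_restrict.2 hK.measure_lt_top.ne
  obtain ⟨C, hC⟩ := hK.exists_bound_of_continuousOn hu
  exact .of_bound (hu.aestronglyMeasurable_of_isCompact hK hK.measurableSet) C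
    (ae_restrict_of_forall_mem hK.measurableSet hC)

theorem two_mul_integral_norm_mul_norm_le {u : α → E} {v : α → F} (hu : MemLp u 2 μ)
    (hv : MemLp v 2 μ) :
    2 * ∫ x, ‖u x‖ * ‖v x‖ ∂μ ≤ (∫ x, ‖u x‖ ^ 2 ∂μ) + ∫ x, ‖v x‖ ^ 2 ∂μ := by
  rw [← integral_const_mul, ← integral_add hu.norm.integrable_sq hv.norm.integrable_sq]
  refine integral_mono ((hu.norm.integrable_mul hv.norm).const_mul 2)
    (hu.norm.integrable_sq.add hv.norm.integrable_sq) fun x => ?_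
  simpa only [mul_assoc] using two_mul_le_add_sq ‖u x‖ ‖v x‖

theorem eLpNorm_two_eq_ofReal_sqrt {u : α → E} (hu : MemLp u 2 μ) :
    eLpNorm u 2 μ = .ofReal √(∫ x, ‖u x‖ ^ 2 ∂μ) := by
  simp [hu.eLpNorm_eq_integral_rpow_norm, Real.sqrt_eq_rpow]

theorem integral_norm_add_conj_sq {u v : α → ℂ} (hu : MemLp u 2 μ) (hv : MemLp v 2 μ) :
    ∫ x, ‖u x + conj (v x)‖ ^ 2 ∂μ =
      (∫ x, ‖u x‖ ^ 2 ∂μ) + (∫ x, ‖v x‖ ^ 2 ∂μ) + 2 * (∫ x, u x * v x ∂μ).re := by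
  have hpointwise (z w : ℂ) : ‖z + conj w‖ ^ 2 = ‖z‖ ^ 2 + ‖w‖ ^ 2 + 2 * (z * w).re := by
    simp only [← normSq_eq_norm_sq, normSq_add, normSq_conj, conj_conj]
  have hsq : Integrable (fun x => ‖u x‖ ^ 2 + ‖v x‖ ^ 2) μ :=
    hu.norm.integrable_sq.add hv.norm.integrable_sq
  have hmul : Integrable (fun x => u x * v x) μ := hu.integrable_mul hv
  have hre : Integrable (fun x => 2 * (u x * v x).re) μ := hmul.re.const_mul 2
  simp only [hpointwise]
  rw [integral_add hsq hre,
    integral_add hu.norm.integrable_sq hv.norm.integrable_sq, integral_const_mul]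
  exact congrArg _ (congrArg _ (integral_re hmul))

theorem tendsto_eLpNorm_norm_sub_norm {l : Filter ι} {p : ℝ≥0∞} {u : ι → α → E} {U : α → E}
    (huU : Tendsto (fun i => eLpNorm (u i - U) p μ) l (𝓝 0)) :
    Tendsto (fun i => eLpNorm ((fun x => ‖u i x‖) - fun x => ‖U x‖) p μ) l (𝓝 0) :=
  tendsto_of_tendsto_of_tendsto_of_le_of_le tendsto_const_nhds huU (fun _ => zero_le)
    fun i => eLpNorm_mono fun x => by simpa using abs_norm_sub_norm_le (u i x) (U x)

variable {𝕜 G : Type*} [RCLike 𝕜] [NormedSpace 𝕜 E] [NormedSpace 𝕜 F] [NormedAddCommGroup G]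
  [NormedSpace 𝕜 G] [NormedSpace ℝ G] [SMulCommClass ℝ 𝕜 G] [CompleteSpace G] {p q : ℝ≥0∞}
  [Fact (1 ≤ p)] [Fact (1 ≤ q)] [ENNReal.HolderConjugate p q] {l : Filter ι}

theorem tendsto_integral_of_tendsto_eLpNorm (B : E →L[𝕜] F →L[𝕜] G) {u : ι → α → E} {U : α → E}
    {v : ι → α → F} {V : α → F} (hu : ∀ i, MemLp (u i) p μ) (hU : MemLp U p μ)
    (hv : ∀ i, MemLp (v i) q μ) (hV : MemLp V q μ)
    (huU : Tendsto (fun i => eLpNorm (u i - U) p μ) l (𝓝 0))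
    (hvV : Tendsto (fun i => eLpNorm (v i - V) q μ) l (𝓝 0)) :
    Tendsto (fun i => ∫ x, B (u i x) (v i x) ∂μ) l (𝓝 (∫ x, B (U x) (V x) ∂μ)) := by
  have hpairing {u : α → E} {v : α → F} (hu : MemLp u p μ) (hv : MemLp v q μ) :
      B.lpPairing μ p q (hu.toLp u) (hv.toLp v) = ∫ x, B (u x) (v x) ∂μ := by
    rw [B.lpPairing_eq_integral]
    refine integral_congr_ae ?_
    filter_upwards [hu.coeFn_toLp, hv.coeFn_toLp] with x hux hvx
    rw [hux, hvx]
  have hlim : Tendsto (fun i => ((hu i).toLp (u i), (hv i).toLp (v i))) l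
      (𝓝 (hU.toLp U, hV.toLp V)) :=
    ((Lp.tendsto_Lp_iff_tendsto_eLpNorm'' u hu U hU).2 huU).prodMk_nhds
      ((Lp.tendsto_Lp_iff_tendsto_eLpNorm'' v hv V hV).2 hvV)
  have hcont : Continuous fun w : Lp E p μ × Lp F q μ => B.lpPairing μ p q w.1 w.2 :=
    (B.lpPairing μ p q).continuous₂
  simpa only [Function.comp_def, hpairing] using (hcont.tendsto _).comp hlim

theorem tendsto_integral_norm_mul_norm {u : ι → α → E} {U : α → E}
    {v : ι → α → F} {V : α → F} (hu : ∀ i, MemLp (u i) p μ) (hU : MemLp U p μ)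
    (hv : ∀ i, MemLp (v i) q μ) (hV : MemLp V q μ)
    (huU : Tendsto (fun i => eLpNorm (u i - U) p μ) l (𝓝 0))
    (hvV : Tendsto (fun i => eLpNorm (v i - V) q μ) l (𝓝 0)) :
    Tendsto (fun i => ∫ x, ‖u i x‖ * ‖v i x‖ ∂μ) l (𝓝 (∫ x, ‖U x‖ * ‖V x‖ ∂μ)) := by
  simpa only [ContinuousLinearMap.mul_apply'] using
    tendsto_integral_of_tendsto_eLpNorm (ContinuousLinearMap.mul ℝ ℝ)
      (u := fun i x => ‖u i x‖) (v := fun i x => ‖v i x‖) (fun i => (hu i).norm) hU.norm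
      (fun i => (hv i).norm) hV.norm
      (tendsto_eLpNorm_norm_sub_norm huU) (tendsto_eLpNorm_norm_sub_norm hvV)

end L2

section Disc

variable {E : Type*} [NormedAddCommGroup E] {φ : ℂ → E} {R r : ℝ}

theorem circleMap_zero_mem_ball (hr : 0 ≤ r) (hrR : r < R) (θ : ℝ) :
    circleMap 0 r θ ∈ Metric.ball (0 : ℂ) R := by
  simpa [abs_of_nonneg hr] using hrR

theorem ofReal_mem_ball_zero {x : ℝ} : (x : ℂ) ∈ Metric.ball 0 R ↔ x ∈ Set.Ioo (-R) R := by
  simp [abs_lt]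

theorem continuous_comp_circleMap (hφ : ContinuousOn φ (Metric.ball 0 R)) (hr : 0 ≤ r)
    (hrR : r < R) : Continuous fun θ => φ (circleMap 0 r θ) :=
  hφ.comp_continuous (continuous_circleMap 0 r) (circleMap_zero_mem_ball hr hrR)

theorem memLp_comp_circleMap (hφ : ContinuousOn φ (Metric.ball 0 R)) (hr : 0 ≤ r) (hrR : r < R)
    {p : ℝ≥0∞} {a b : ℝ} :
    MemLp (fun θ => φ (circleMap 0 r θ)) p (volume.restrict (Set.Ioc a b)) :=
  (memLp_restrict_of_isCompact (continuous_comp_circleMap hφ hr hrR).continuousOn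
    isCompact_Icc).mono_measure (Measure.restrict_mono_set _ Set.Ioc_subset_Icc_self)

theorem continuousOn_comp_ofReal (hφ : ContinuousOn φ (Metric.ball 0 R)) :
    ContinuousOn (fun x : ℝ => φ x) (Set.Ioo (-R) R) :=
  hφ.comp continuous_ofReal.continuousOn fun _ => ofReal_mem_ball_zero.2

theorem intervalIntegrable_comp_ofReal (hφ : ContinuousOn φ (Metric.ball 0 R)) (hr : 0 ≤ r)
    (hrR : r < R) : IntervalIntegrable (fun x : ℝ => φ x) volume (-r) r :=
  ((continuousOn_comp_ofReal hφ).mono fun x hx => by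
    rw [Set.uIcc_of_le (by linarith)] at hx
    exact ⟨by linarith [hx.1], by linarith [hx.2]⟩).intervalIntegrable

variable [NormedSpace ℂ E] [CompleteSpace E]

theorem norm_sub_circleMap_le {Φ : ℂ → E} (hφ : ContinuousOn φ (Metric.ball 0 R))
    (hΦ : ∀ z ∈ Metric.ball 0 R, HasDerivAt Φ (φ z) z) (hr : 0 ≤ r) (hrR : r < R) {a b : ℝ}
    (hab : a ≤ b) :
    ‖Φ (circleMap 0 r b) - Φ (circleMap 0 r a)‖ ≤ r * ∫ θ in a..b, ‖φ (circleMap 0 r θ)‖ := by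
  have hc := continuous_comp_circleMap hφ hr hrR
  have hderiv (θ : ℝ) : HasDerivAt (fun θ => Φ (circleMap 0 r θ))
      ((circleMap 0 r θ * I) • φ (circleMap 0 r θ)) θ :=
    (hΦ _ (circleMap_zero_mem_ball hr hrR θ)).scomp θ (hasDerivAt_circleMap 0 r θ)
  rw [← intervalIntegral.integral_eq_sub_of_hasDerivAt (fun θ _ => hderiv θ)
    (((continuous_circleMap 0 r).mul_const I).smul hc |>.intervalIntegrable _ _),
    ← intervalIntegral.integral_const_mul]
  refine (intervalIntegral.norm_integral_le_integral_norm hab).trans_eq ?_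
  simp [norm_smul, abs_of_nonneg hr]

-- The diameter and either half circle join the same two points, so a primitive of `φ` has the same
-- increment along all three paths.
theorem two_mul_norm_integral_diameter_le (hφ : DifferentiableOn ℂ φ (Metric.ball 0 R))
    (hr : 0 ≤ r) (hrR : r < R) :
    2 * ‖∫ x in (-r)..r, φ x‖ ≤ r * ∫ θ in (0 : ℝ)..2 * π, ‖φ (circleMap 0 r θ)‖ := by
  obtain ⟨Φ, hΦ⟩ := hφ.isExactOn_ball
  have hdiam : ∫ x in (-r)..r, φ x = Φ r - Φ (-r) := by
    rw [intervalIntegral.integral_eq_sub_of_hasDerivAt (f := fun x : ℝ => Φ x) (fun x hx => ?_)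
      (intervalIntegrable_comp_ofReal hφ.continuousOn hr hrR), ofReal_neg]
    rw [Set.uIcc_of_le (by linarith)] at hx
    have hx' : (x : ℂ) ∈ Metric.ball 0 R :=
      ofReal_mem_ball_zero.2 ⟨by linarith [hx.1], by linarith [hx.2]⟩
    simpa [Function.comp_def] using (hΦ x hx').scomp x ofRealCLM.hasDerivAt
  have hupper := norm_sub_circleMap_le hφ.continuousOn hΦ hr hrR pi_pos.le
  have hlower := norm_sub_circleMap_le hφ.continuousOn hΦ hr hrR (by linarith [pi_pos] : π ≤ 2 * π)
  have hc := (continuous_comp_circleMap hφ.continuousOn hr hrR).norm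
  rw [← intervalIntegral.integral_add_adjacent_intervals (hc.intervalIntegrable 0 π)
    (hc.intervalIntegrable π (2 * π)), hdiam]
  have hright : circleMap 0 r (2 * π) = r := by simp [circleMap_zero]
  have hright' : circleMap 0 r 0 = r := by simp [circleMap_zero]
  have hleft : circleMap 0 r π = -r := by simp [circleMap_zero]
  rw [hright', hleft, norm_sub_rev] at hupper
  rw [hright, hleft] at hlower
  linarith

theorem integral_comp_circleMap_zero (hφ : DifferentiableOn ℂ φ (Metric.ball 0 R)) (hr : 0 ≤ r)
    (hrR : r < R) : ∫ θ in (0 : ℝ)..2 * π, φ (circleMap 0 r θ) = (2 * π) • φ 0 := by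
  have hclosure : closure (Metric.ball (0 : ℂ) |r|) ⊆ Metric.ball 0 R := by
    rw [abs_of_nonneg hr]
    exact Metric.closure_ball_subset_closedBall.trans (Metric.closedBall_subset_ball hrR)
  rw [← (hφ.mono hclosure).diffContOnCl.circleAverage, circleAverage_def,
    smul_inv_smul₀ two_pi_pos.ne']

end Disc

section RieszFejer

variable {φ ψ : ℂ → ℂ} {R r : ℝ}

theorem differentiableOn_conj_comp_conj (hφ : DifferentiableOn ℂ φ (Metric.ball 0 R)) :
    DifferentiableOn ℂ (fun z => conj (φ (conj z))) (Metric.ball 0 R) := by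
  intro z hz
  have hz' : conj z ∈ Metric.ball (0 : ℂ) R := by simpa using hz
  have := (hφ.differentiableAt (Metric.isOpen_ball.mem_nhds hz')).conj_conj
  rw [conj_conj] at this
  exact this.differentiableWithinAt

/-- `circleMeanSq φ r` is `2π M₂(r, φ)²`, where `M₂(r, φ)` is the quadratic integral mean of `φ`
over the circle `|z| = r`. -/
noncomputable def circleMeanSq (φ : ℂ → ℂ) (r : ℝ) : ℝ :=
  ∫ θ in (0 : ℝ)..2 * π, ‖φ (circleMap 0 r θ)‖ ^ 2

theorem circleMeanSq_nonneg (φ : ℂ → ℂ) (r : ℝ) : 0 ≤ circleMeanSq φ r :=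
  intervalIntegral.integral_nonneg two_pi_pos.le fun _ _ => by positivity

theorem circleMeanSq_conj_comp_conj (φ : ℂ → ℂ) (r : ℝ) :
    circleMeanSq (fun z => conj (φ (conj z))) r = circleMeanSq φ r := by
  have hperiodic : Function.Periodic (fun θ => ‖φ (circleMap 0 r θ)‖ ^ 2) (2 * π) :=
    (periodic_circleMap 0 r).comp fun z => ‖φ z‖ ^ 2
  simp only [circleMeanSq, RCLike.norm_conj, conj_circleMap_zero]
  rw [intervalIntegral.integral_comp_neg fun θ => ‖φ (circleMap 0 r θ)‖ ^ 2]
  simpa using hperiodic.intervalIntegral_add_eq (-(2 * π)) 0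

theorem two_mul_integral_norm_mul_circle_le (hφ : ContinuousOn φ (Metric.ball 0 R))
    (hψ : ContinuousOn ψ (Metric.ball 0 R)) (hr : 0 ≤ r) (hrR : r < R) :
    2 * ∫ θ in (0 : ℝ)..2 * π, ‖φ (circleMap 0 r θ) * ψ (circleMap 0 r θ)‖ ≤
      circleMeanSq φ r + circleMeanSq ψ r := by
  simpa only [circleMeanSq, intervalIntegral.integral_of_le two_pi_pos.le, norm_mul] using
    two_mul_integral_norm_mul_norm_le (memLp_comp_circleMap hφ hr hrR)
      (memLp_comp_circleMap hψ hr hrR)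

-- On the real axis `|φ|²` is the restriction of the holomorphic function `φ(z) conj (φ(conj z))`.
theorem two_mul_integral_norm_sq_diameter_le_circleMeanSq
    (hφ : DifferentiableOn ℂ φ (Metric.ball 0 R)) (hr : 0 ≤ r) (hrR : r < R) :
    2 * ∫ x in (-r)..r, ‖φ x‖ ^ 2 ≤ r * circleMeanSq φ r := by
  have hφ' := differentiableOn_conj_comp_conj hφ
  have hdiam : ∫ x in (-r)..r, φ x * conj (φ (conj (x : ℂ))) =
      ((∫ x in (-r)..r, ‖φ x‖ ^ 2 : ℝ) : ℂ) := by
    simp [← intervalIntegral.integral_ofReal, mul_conj']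
  have hle := two_mul_norm_integral_diameter_le (hφ.mul hφ') hr hrR
  have hamgm := two_mul_integral_norm_mul_circle_le hφ.continuousOn hφ'.continuousOn hr hrR
  rw [circleMeanSq_conj_comp_conj] at hamgm
  simp only [Pi.mul_apply, hdiam, norm_real] at hle
  linarith [le_norm_self (∫ x in (-r)..r, ‖φ x‖ ^ 2), mul_le_mul_of_nonneg_left hamgm hr]

end RieszFejer

section Fourier

theorem fourierCoeffOn_sub {E : Type*} [NormedAddCommGroup E] [NormedSpace ℂ E] {a b : ℝ}
    (hab : a < b) {u v : ℝ → E} (hu : IntervalIntegrable u volume a b)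
    (hv : IntervalIntegrable v volume a b) (n : ℤ) :
    fourierCoeffOn hab (u - v) n = fourierCoeffOn hab u n - fourierCoeffOn hab v n := by
  have hcont : Continuous fun x : ℝ => fourier (-n) (x : AddCircle (b - a)) :=
    (fourier (-n)).continuous.comp (AddCircle.continuous_mk' _)
  simp only [fourierCoeffOn_eq_integral, Pi.sub_apply, smul_sub]
  rw [intervalIntegral.integral_sub (hu.continuousOn_smul hcont.continuousOn)
    (hv.continuousOn_smul hcont.continuousOn), smul_sub]

variable {φ : ℂ → ℂ} {R r s : ℝ}

theorem fourierCoeffOn_comp_circleMap (φ : ℂ → ℂ) (hr : r ≠ 0) (n : ℤ) :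
    fourierCoeffOn two_pi_pos (fun θ => φ (circleMap 0 r θ)) n =
      r ^ n * circleAverage (fun z => z ^ (-n) * φ z) 0 r := by
  have hfourier (θ : ℝ) : fourier (-n) (θ : AddCircle (2 * π - 0)) =
      (r : ℂ) ^ n * circleMap 0 r θ ^ (-n) := by
    have hr' : (r : ℂ) ≠ 0 := ofReal_ne_zero.2 hr
    rw [fourier_coe_apply, circleMap_zero_zpow, circleMap_zero, ofReal_zpow, zpow_neg,
      mul_inv_cancel_left₀ (zpow_ne_zero n hr')]
    congr 1
    have : (π : ℂ) ≠ 0 := ofReal_ne_zero.2 pi_ne_zero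
    push_cast
    field_simp
    ring
  rw [fourierCoeffOn_eq_integral, circleAverage_def]
  simp only [hfourier, smul_eq_mul, mul_assoc, intervalIntegral.integral_const_mul]
  simp only [sub_zero, one_div, mul_inv_rev, zpow_neg, real_smul, ofReal_mul, ofReal_inv,
    ofReal_ofNat]
  ring

theorem fourierCoeffOn_comp_circleMap_of_neg (hφ : DifferentiableOn ℂ φ (Metric.ball 0 R))
    (hr : 0 < r) (hrR : r < R) {n : ℤ} (hn : n < 0) :
    fourierCoeffOn two_pi_pos (fun θ => φ (circleMap 0 r θ)) n = 0 := by
  obtain ⟨m, hm⟩ : ∃ m : ℕ, -n = m := Int.eq_ofNat_of_zero_le (by omega)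
  have hmean := integral_comp_circleMap_zero
    (φ := fun z => z ^ m * φ z) ((differentiableOn_id.pow m).mul hφ) hr.le hrR
  have hm0 : m ≠ 0 := by omega
  simp only [fourierCoeffOn_comp_circleMap φ hr.ne', hm, zpow_natCast, circleAverage_def, hmean]
  simp [hm0]

theorem fourierCoeffOn_comp_circleMap_natCast (hφ : DifferentiableOn ℂ φ (Metric.ball 0 R))
    (hr : 0 < r) (hrR : r < R) (n : ℕ) :
    fourierCoeffOn two_pi_pos (fun θ => φ (circleMap 0 r θ)) n =
      r ^ n * ((n.factorial : ℂ)⁻¹ * iteratedDeriv n φ 0) := by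
  have hcauchy := (hφ.mono (Metric.closedBall_subset_ball hrR))
    |>.circleIntegral_one_div_sub_center_pow_smul hr n
  have hintegrand (z : ℂ) :
      (z - 0)⁻¹ • (z ^ (-(n : ℤ)) * φ z) = (1 / (z - 0) ^ (n + 1)) • φ z := by
    simp only [sub_zero, zpow_neg, zpow_natCast, smul_eq_mul, pow_succ', one_div, mul_inv_rev]
    ring
  rw [fourierCoeffOn_comp_circleMap φ hr.ne', circleAverage_eq_circleIntegral hr.ne']
  simp only [hintegrand]
  rw [hcauchy, smul_eq_mul, smul_eq_mul, div_mul_eq_mul_div, mul_div_assoc,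
    inv_mul_cancel_left₀ two_pi_I_ne_zero, zpow_natCast, inv_mul_eq_div]

theorem exists_fourierCoeffOn_comp_circleMap_eq_mul (hφ : DifferentiableOn ℂ φ (Metric.ball 0 R))
    (hs : 0 < s) (hsr : s ≤ r) (hrR : r < R) (n : ℤ) :
    ∃ t ∈ Set.Icc (0 : ℝ) 1, fourierCoeffOn two_pi_pos (fun θ => φ (circleMap 0 s θ)) n =
      t * fourierCoeffOn two_pi_pos (fun θ => φ (circleMap 0 r θ)) n := by
  have hr : 0 < r := hs.trans_le hsr
  rcases lt_or_ge n 0 with hn | hn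
  · refine ⟨0, by simp, ?_⟩
    rw [fourierCoeffOn_comp_circleMap_of_neg hφ hs (hsr.trans_lt hrR) hn, ofReal_zero, zero_mul]
  · lift n to ℕ using hn
    refine ⟨(s / r) ^ n, ⟨by positivity, pow_le_one₀ (by positivity) (div_le_one_of_le₀ hsr hr.le)⟩,
      ?_⟩
    rw [fourierCoeffOn_comp_circleMap_natCast hφ hs (hsr.trans_lt hrR),
      fourierCoeffOn_comp_circleMap_natCast hφ hr hrR, ofReal_pow, ofReal_div,
      ← mul_assoc (_ ^ n) (_ ^ n), ← mul_pow, div_mul_cancel₀ _ (ofReal_ne_zero.2 hr.ne')]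

-- The `n`-th Fourier coefficients on the circles of radius `s` and `r` satisfy `c = t * d` with
-- `0 ≤ t ≤ 1`, so `|d - c|² = (1 - t)² |d|² ≤ (1 - t²) |d|² = |d|² - |c|²`; sum by Parseval.
theorem integral_norm_sq_sub_circle_le (hφ : DifferentiableOn ℂ φ (Metric.ball 0 R))
    (hs : 0 < s) (hsr : s ≤ r) (hrR : r < R) :
    ∫ θ in (0 : ℝ)..2 * π, ‖φ (circleMap 0 r θ) - φ (circleMap 0 s θ)‖ ^ 2 ≤
      circleMeanSq φ r - circleMeanSq φ s := by
  set u : ℝ → ℂ := fun θ => φ (circleMap 0 r θ)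
  set v : ℝ → ℂ := fun θ => φ (circleMap 0 s θ)
  have hr : 0 < r := hs.trans_le hsr
  have hu : Continuous u := continuous_comp_circleMap hφ.continuousOn hr.le hrR
  have hv : Continuous v := continuous_comp_circleMap hφ.continuousOn hs.le (hsr.trans_lt hrR)
  have hu2 : MemLp u 2 (volume.restrict (Set.Ioc 0 (2 * π))) :=
    memLp_comp_circleMap hφ.continuousOn hr.le hrR
  have hv2 : MemLp v 2 (volume.restrict (Set.Ioc 0 (2 * π))) :=
    memLp_comp_circleMap hφ.continuousOn hs.le (hsr.trans_lt hrR)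
  have hcoeff (n : ℤ) : ‖fourierCoeffOn two_pi_pos (u - v) n‖ ^ 2 ≤
      ‖fourierCoeffOn two_pi_pos u n‖ ^ 2 - ‖fourierCoeffOn two_pi_pos v n‖ ^ 2 := by
    obtain ⟨t, ⟨ht0, ht1⟩, ht⟩ :=
      exists_fourierCoeffOn_comp_circleMap_eq_mul hφ hs hsr hrR n
    rw [fourierCoeffOn_sub two_pi_pos (hu.intervalIntegrable _ _) (hv.intervalIntegrable _ _), ht,
      ← one_sub_mul, norm_mul, norm_mul, norm_real, ← ofReal_one, ← ofReal_sub, norm_real,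
      mul_pow, mul_pow, ← one_sub_mul, Real.norm_eq_abs, Real.norm_eq_abs, sq_abs, sq_abs]
    exact mul_le_mul_of_nonneg_right (by nlinarith) (sq_nonneg _)
  have hle := hasSum_le hcoeff (hasSum_sq_fourierCoeffOn two_pi_pos (hu2.sub hv2))
    ((hasSum_sq_fourierCoeffOn two_pi_pos hu2).sub (hasSum_sq_fourierCoeffOn two_pi_pos hv2))
  rw [← smul_sub] at hle
  exact le_of_smul_le_smul_left hle (by simp [pi_pos])

theorem monotoneOn_circleMeanSq (hφ : DifferentiableOn ℂ φ (Metric.ball 0 R)) :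
    MonotoneOn (circleMeanSq φ) (Set.Ioo 0 R) := fun _ hs _ hr hsr =>
  sub_nonneg.1 <| (intervalIntegral.integral_nonneg two_pi_pos.le fun _ _ => by positivity).trans
    (integral_norm_sq_sub_circle_le hφ hs.1 hsr hr.2)

end Fourier

section Hardy

/-- `Φ` is the radial boundary function of `φ` on the unit circle: `φ (r e^{iθ}) → Φ θ` as
`r → 1⁻`, for almost every `θ`. -/
def HasRadialLimit (φ : ℂ → ℂ) (Φ : ℝ → ℂ) : Prop :=
  ∀ᵐ θ : ℝ, Tendsto (fun r : ℝ => φ (circleMap 0 r θ)) (𝓝[<] 1) (𝓝 (Φ θ))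

/-- Membership in the analytic Hardy space `H²` of the unit disc: `h` is holomorphic with bounded
quadratic means over the circles `|z| = r`, `0 < r < 1`. Values outside the disc are irrelevant. -/
structure MemHardyTwo (h : ℂ → ℂ) : Prop where
  differentiableOn : DifferentiableOn ℂ h (Metric.ball 0 1)
  bddAbove_circleMeanSq : BddAbove (circleMeanSq h '' Set.Ioo 0 1)

-- Dilates are indexed by the radii in `(0, 1)`, where `atTop` plays the role of `𝓝[<] 1`, because
-- the convergence theorems for `Lp` want every member of the family, not eventually all, in `Lp`.
local instance nonempty_Ioo_zero_one : Nonempty (Set.Ioo (0 : ℝ) 1) :=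
  Set.nonempty_Ioo_subtype one_pos

variable {φ h g : ℂ → ℂ} {Φ H G : ℝ → ℂ}

theorem HasRadialLimit.ae_tendsto_atTop (hΦ : HasRadialLimit φ Φ) (s : Set ℝ) :
    ∀ᵐ θ ∂volume.restrict s,
      Tendsto (fun r : Set.Ioo (0 : ℝ) 1 => φ (circleMap 0 r θ)) atTop (𝓝 (Φ θ)) :=
  ae_restrict_of_ae <| hΦ.mono fun _ => (tendsto_comp_coe_Ioo_atTop one_pos).2

theorem tendsto_coe_Ioo_atTop : Tendsto (fun r : Set.Ioo (0 : ℝ) 1 => (r : ℝ)) atTop (𝓝 1) :=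
  ((tendsto_Ioo_atTop (f := id)).1 tendsto_id).mono_right nhdsWithin_le_nhds

theorem aecover_Ioc_neg_atTop :
    AECover (volume.restrict (Set.Ioc (-1 : ℝ) 1)) atTop
      fun r : Set.Ioo (0 : ℝ) 1 => Set.Ioc (-(r : ℝ)) r :=
  aecover_Ioc_of_Ioc tendsto_coe_Ioo_atTop.neg tendsto_coe_Ioo_atTop

theorem restrict_Ioc_neg_restrict (r : Set.Ioo (0 : ℝ) 1) :
    (volume.restrict (Set.Ioc (-1 : ℝ) 1)).restrict (Set.Ioc (-(r : ℝ)) r) =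
      volume.restrict (Set.Ioc (-(r : ℝ)) r) :=
  Measure.restrict_restrict_of_subset
    (Set.Ioc_subset_Ioc (neg_le_neg r.2.2.le) r.2.2.le)

theorem tendsto_integral_diameter {E : Type*} [NormedAddCommGroup E] [NormedSpace ℝ E]
    {u : ℝ → E} (hu : IntervalIntegrable u volume (-1) 1) :
    Tendsto (fun r : Set.Ioo (0 : ℝ) 1 => ∫ x in (-(r : ℝ))..r, u x) atTop
      (𝓝 (∫ x in (-1)..1, u x)) := by
  have hlim := aecover_Ioc_neg_atTop.integral_tendsto_of_countably_generated hu.1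
  simp only [restrict_Ioc_neg_restrict] at hlim
  rw [intervalIntegral.integral_of_le (by norm_num)]
  refine hlim.congr fun r => ?_
  rw [intervalIntegral.integral_of_le (neg_le_self r.2.1.le)]

namespace MemHardyTwo

theorem memLp_circle (hh : MemHardyTwo h) (r : Set.Ioo (0 : ℝ) 1) :
    MemLp (fun θ => h (circleMap 0 r θ)) 2 (volume.restrict (Set.Ioc 0 (2 * π))) :=
  memLp_comp_circleMap hh.differentiableOn.continuousOn r.2.1.le r.2.2

theorem circleMeanSq_le_sSup (hh : MemHardyTwo h) (r : Set.Ioo (0 : ℝ) 1) :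
    circleMeanSq h r ≤ sSup (circleMeanSq h '' Set.Ioo 0 1) :=
  le_csSup hh.bddAbove_circleMeanSq (Set.mem_image_of_mem _ r.2)

theorem tendsto_circleMeanSq (hh : MemHardyTwo h) :
    Tendsto (fun r : Set.Ioo (0 : ℝ) 1 => circleMeanSq h r) atTop
      (𝓝 (sSup (circleMeanSq h '' Set.Ioo 0 1))) :=
  (tendsto_comp_coe_Ioo_atTop one_pos).2 <|
    (monotoneOn_circleMeanSq hh.differentiableOn).tendsto_nhdsWithin_Ioo_left
      (Set.nonempty_Ioo.2 one_pos) hh.bddAbove_circleMeanSq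

theorem eLpNorm_circle_sub_radialLimit_le (hh : MemHardyTwo h) (hH : HasRadialLimit h H)
    (s : Set.Ioo (0 : ℝ) 1) :
    eLpNorm ((fun θ => h (circleMap 0 s θ)) - H) 2 (volume.restrict (Set.Ioc 0 (2 * π))) ≤
      .ofReal √(sSup (circleMeanSq h '' Set.Ioo 0 1) - circleMeanSq h s) := by
  rw [eLpNorm_sub_comm]
  refine Lp.eLpNorm_le_of_ae_tendsto (u := atTop)
    (f := fun (r : Set.Ioo (0 : ℝ) 1) θ => h (circleMap 0 r θ) - h (circleMap 0 s θ)) ?_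
    (fun r => ((hh.memLp_circle r).sub (hh.memLp_circle s)).1) ?_
  · filter_upwards [eventually_ge_atTop s] with r hr
    refine (eLpNorm_two_eq_ofReal_sqrt ((hh.memLp_circle r).sub (hh.memLp_circle s))).trans_le ?_
    have hParseval := integral_norm_sq_sub_circle_le hh.differentiableOn s.2.1 hr r.2.2
    rw [intervalIntegral.integral_of_le two_pi_pos.le] at hParseval
    gcongr
    exact hParseval.trans (sub_le_sub_right (hh.circleMeanSq_le_sSup r) _)
  · filter_upwards [hH.ae_tendsto_atTop _] with θ hθ using hθ.sub_const _

theorem memLp_radialLimit (hh : MemHardyTwo h) (hH : HasRadialLimit h H) :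
    MemLp H 2 (volume.restrict (Set.Ioc 0 (2 * π))) := by
  obtain ⟨s⟩ := nonempty_Ioo_zero_one
  have hHmeas : AEStronglyMeasurable H (volume.restrict (Set.Ioc 0 (2 * π))) :=
    aestronglyMeasurable_of_tendsto_ae atTop (fun r => (hh.memLp_circle r).1)
      (hH.ae_tendsto_atTop _)
  have hsub : MemLp ((fun θ => h (circleMap 0 s θ)) - H) 2
      (volume.restrict (Set.Ioc 0 (2 * π))) :=
    ⟨(hh.memLp_circle s).1.sub hHmeas,
      (hh.eLpNorm_circle_sub_radialLimit_le hH s).trans_lt ENNReal.ofReal_lt_top⟩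
  simpa using (hh.memLp_circle s).sub hsub

theorem tendsto_eLpNorm_circle_sub_radialLimit (hh : MemHardyTwo h) (hH : HasRadialLimit h H) :
    Tendsto (fun r : Set.Ioo (0 : ℝ) 1 => eLpNorm ((fun θ => h (circleMap 0 r θ)) - H) 2
      (volume.restrict (Set.Ioc 0 (2 * π)))) atTop (𝓝 0) := by
  have hgap : Tendsto (fun r : Set.Ioo (0 : ℝ) 1 =>
      ENNReal.ofReal √(sSup (circleMeanSq h '' Set.Ioo 0 1) - circleMeanSq h r)) atTop (𝓝 0) := by
    simpa using ENNReal.tendsto_ofReal (hh.tendsto_circleMeanSq.const_sub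
      (sSup (circleMeanSq h '' Set.Ioo 0 1))).sqrt
  exact tendsto_of_tendsto_of_tendsto_of_le_of_le tendsto_const_nhds hgap (fun _ => zero_le)
    (hh.eLpNorm_circle_sub_radialLimit_le hH)

theorem tendsto_integral_norm_mul_circle (hh : MemHardyTwo h) (hg : MemHardyTwo g)
    (hH : HasRadialLimit h H) (hG : HasRadialLimit g G) :
    Tendsto (fun r : Set.Ioo (0 : ℝ) 1 =>
      ∫ θ in (0 : ℝ)..2 * π, ‖h (circleMap 0 r θ) * g (circleMap 0 r θ)‖) atTop
      (𝓝 (∫ θ in (0 : ℝ)..2 * π, ‖H θ * G θ‖)) := by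
  simpa only [norm_mul, intervalIntegral.integral_of_le two_pi_pos.le] using
    tendsto_integral_norm_mul_norm hh.memLp_circle (hh.memLp_radialLimit hH) hg.memLp_circle
      (hg.memLp_radialLimit hG) (hh.tendsto_eLpNorm_circle_sub_radialLimit hH)
      (hg.tendsto_eLpNorm_circle_sub_radialLimit hG)

theorem integral_radialLimit_mul (hh : MemHardyTwo h) (hg : MemHardyTwo g)
    (hH : HasRadialLimit h H) (hG : HasRadialLimit g G) :
    ∫ θ in (0 : ℝ)..2 * π, H θ * G θ = 2 * π * (h 0 * g 0) := by
  have hlim := tendsto_integral_of_tendsto_eLpNorm (ContinuousLinearMap.mul ℂ ℂ) hh.memLp_circle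
    (hh.memLp_radialLimit hH) hg.memLp_circle (hg.memLp_radialLimit hG)
    (hh.tendsto_eLpNorm_circle_sub_radialLimit hH) (hg.tendsto_eLpNorm_circle_sub_radialLimit hG)
  simp only [ContinuousLinearMap.mul_apply', ← intervalIntegral.integral_of_le two_pi_pos.le]
    at hlim
  refine tendsto_nhds_unique hlim (tendsto_const_nhds.congr fun r => ?_)
  have hmean := integral_comp_circleMap_zero (hh.differentiableOn.mul hg.differentiableOn)
    r.2.1.le r.2.2
  simpa [mul_assoc] using hmean.symm

theorem integral_norm_sq_radialLimit (hh : MemHardyTwo h) (hH : HasRadialLimit h H) :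
    ∫ θ in (0 : ℝ)..2 * π, ‖H θ‖ ^ 2 = sSup (circleMeanSq h '' Set.Ioo 0 1) := by
  refine tendsto_nhds_unique ?_ hh.tendsto_circleMeanSq
  simpa only [circleMeanSq, ← sq, norm_pow] using hh.tendsto_integral_norm_mul_circle hh hH hH

theorem memLp_diameter (hh : MemHardyTwo h) :
    MemLp (fun x : ℝ => h x) 2 (volume.restrict (Set.Ioc (-1) 1)) := by
  have hcont := continuousOn_comp_ofReal hh.differentiableOn.continuousOn
  have hmeas : AEStronglyMeasurable (fun x : ℝ => h x) (volume.restrict (Set.Ioc (-1) 1)) := by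
    rw [← restrict_Ioo_eq_restrict_Ioc]
    exact hcont.aestronglyMeasurable measurableSet_Ioo
  rw [memLp_two_iff_integrable_sq_norm hmeas]
  refine aecover_Ioc_neg_atTop.integrable_of_integral_norm_bounded
    (sSup (circleMeanSq h '' Set.Ioo 0 1)) (fun r => ?_) (.of_forall fun r => ?_)
  · rw [IntegrableOn, restrict_Ioc_neg_restrict]
    exact (intervalIntegrable_comp_ofReal (φ := fun z => ‖h z‖ ^ 2)
      (hh.differentiableOn.continuousOn.norm.pow 2) r.2.1.le r.2.2).1
  · have hle := two_mul_integral_norm_sq_diameter_le_circleMeanSq hh.differentiableOn r.2.1.le r.2.2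
    have hnonneg := circleMeanSq_nonneg h r
    have hsup := hh.circleMeanSq_le_sSup r
    simp only [restrict_Ioc_neg_restrict, norm_pow, norm_norm]
    rw [← intervalIntegral.integral_of_le (neg_le_self r.2.1.le)]
    nlinarith [r.2.1, r.2.2]

theorem two_mul_integral_norm_sq_diameter_le (hh : MemHardyTwo h) (hH : HasRadialLimit h H) :
    2 * ∫ x in (-1 : ℝ)..1, ‖h x‖ ^ 2 ≤ ∫ θ in (0 : ℝ)..2 * π, ‖H θ‖ ^ 2 := by
  have hint : IntervalIntegrable (fun x : ℝ => ‖h x‖ ^ 2) volume (-1) 1 :=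
    (intervalIntegrable_iff_integrableOn_Ioc_of_le (by norm_num)).2
      hh.memLp_diameter.norm.integrable_sq
  have hright := tendsto_coe_Ioo_atTop.mul hh.tendsto_circleMeanSq
  rw [one_mul, ← hh.integral_norm_sq_radialLimit hH] at hright
  exact le_of_tendsto_of_tendsto' ((tendsto_integral_diameter hint).const_mul 2) hright
    fun r => two_mul_integral_norm_sq_diameter_le_circleMeanSq hh.differentiableOn r.2.1.le r.2.2

theorem two_mul_norm_integral_mul_diameter_le (hh : MemHardyTwo h) (hg : MemHardyTwo g)
    (hH : HasRadialLimit h H) (hG : HasRadialLimit g G) :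
    2 * ‖∫ x in (-1 : ℝ)..1, h x * g x‖ ≤ ∫ θ in (0 : ℝ)..2 * π, ‖H θ * G θ‖ := by
  have hint : IntervalIntegrable (fun x : ℝ => h x * g x) volume (-1) 1 :=
    (intervalIntegrable_iff_integrableOn_Ioc_of_le (by norm_num)).2
      (hh.memLp_diameter.integrable_mul hg.memLp_diameter)
  have hright := tendsto_coe_Ioo_atTop.mul (hh.tendsto_integral_norm_mul_circle hg hH hG)
  rw [one_mul] at hright
  exact le_of_tendsto_of_tendsto' ((tendsto_integral_diameter hint).norm.const_mul 2) hright
    fun r => two_mul_norm_integral_diameter_le (hh.differentiableOn.mul hg.differentiableOn)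
      r.2.1.le r.2.2

end MemHardyTwo

end Hardy

section HarmonicHardy

variable {h g f : ℂ → ℂ} {F H G : ℝ → ℂ}

theorem intervalIntegral_norm_add_conj_sq {a b : ℝ} (hab : a ≤ b) {u v : ℝ → ℂ}
    (hu : MemLp u 2 (volume.restrict (Set.Ioc a b)))
    (hv : MemLp v 2 (volume.restrict (Set.Ioc a b))) :
    ∫ x in a..b, ‖u x + conj (v x)‖ ^ 2 =
      (∫ x in a..b, ‖u x‖ ^ 2) + (∫ x in a..b, ‖v x‖ ^ 2) + 2 * (∫ x in a..b, u x * v x).re := by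
  simpa only [intervalIntegral.integral_of_le hab] using integral_norm_add_conj_sq hu hv

theorem circleMeanSq_of_eqOn_add_conj {R r : ℝ} (hh : DifferentiableOn ℂ h (Metric.ball 0 R))
    (hg : DifferentiableOn ℂ g (Metric.ball 0 R))
    (hf : Set.EqOn f (fun z => h z + conj (g z)) (Metric.ball 0 R)) (hr : 0 ≤ r) (hrR : r < R) :
    circleMeanSq f r = circleMeanSq h r + circleMeanSq g r + 4 * π * (h 0 * g 0).re := by
  have hmean : ∫ θ in (0 : ℝ)..2 * π, h (circleMap 0 r θ) * g (circleMap 0 r θ) =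
      (2 * π) • (h 0 * g 0) := integral_comp_circleMap_zero (hh.mul hg) hr hrR
  simp only [circleMeanSq, hf (circleMap_zero_mem_ball hr hrR _)]
  rw [intervalIntegral_norm_add_conj_sq two_pi_pos.le
    (memLp_comp_circleMap hh.continuousOn hr hrR) (memLp_comp_circleMap hg.continuousOn hr hrR),
    hmean, smul_re, smul_eq_mul]
  ring

theorem memHardyTwo_and_of_eqOn_add_conj (hh : DifferentiableOn ℂ h (Metric.ball 0 1))
    (hg : DifferentiableOn ℂ g (Metric.ball 0 1))
    (hf : Set.EqOn f (fun z => h z + conj (g z)) (Metric.ball 0 1))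
    (hbdd : BddAbove (circleMeanSq f '' Set.Ioo 0 1)) : MemHardyTwo h ∧ MemHardyTwo g := by
  obtain ⟨C, hC⟩ := hbdd
  have hle (r : ℝ) (hr : r ∈ Set.Ioo (0 : ℝ) 1) :
      circleMeanSq h r + circleMeanSq g r ≤ C - 4 * π * (h 0 * g 0).re := by
    have := hC (Set.mem_image_of_mem _ hr)
    rw [circleMeanSq_of_eqOn_add_conj hh hg hf hr.1.le hr.2] at this
    linarith
  refine ⟨⟨hh, C - 4 * π * (h 0 * g 0).re, ?_⟩, ⟨hg, C - 4 * π * (h 0 * g 0).re, ?_⟩⟩ <;>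
    rintro _ ⟨r, hr, rfl⟩ <;>
    linarith [hle r hr, circleMeanSq_nonneg h r, circleMeanSq_nonneg g r]

theorem HasRadialLimit.ae_eq_add_conj (hF : HasRadialLimit f F) (hH : HasRadialLimit h H)
    (hG : HasRadialLimit g G) (hf : Set.EqOn f (fun z => h z + conj (g z)) (Metric.ball 0 1)) :
    F =ᵐ[volume] fun θ => H θ + conj (G θ) := by
  filter_upwards [hF, hH, hG] with θ hFθ hHθ hGθ
  have hinside : ∀ᶠ r : ℝ in 𝓝[<] 1, r ∈ Set.Ioo (0 : ℝ) 1 := Ioo_mem_nhdsLT one_pos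
  refine tendsto_nhds_unique hFθ ((hHθ.add hGθ.star).congr' ?_)
  filter_upwards [hinside] with r hr using (hf (circleMap_zero_mem_ball hr.1.le hr.2 θ)).symm

theorem harmonic_riesz_fejer_hg_general (hh : DifferentiableOn ℂ h (Metric.ball 0 1))
    (hg : DifferentiableOn ℂ g (Metric.ball 0 1))
    (hf : Set.EqOn f (fun z => h z + conj (g z)) (Metric.ball 0 1))
    (hbdd : BddAbove (circleMeanSq f '' Set.Ioo 0 1)) (hF : HasRadialLimit f F)
    (hH : HasRadialLimit h H) (hG : HasRadialLimit g G) :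
    IntervalIntegrable (fun x : ℝ => ‖f x‖ ^ 2) volume (-1) 1 ∧
      ∫ x in (-1 : ℝ)..1, ‖f x‖ ^ 2 ≤
        1 / 2 * (∫ θ in (0 : ℝ)..2 * π, ‖F θ‖ ^ 2) + (∫ θ in (0 : ℝ)..2 * π, ‖H θ * G θ‖) -
          2 * π * (h 0 * g 0).re := by
  obtain ⟨hh2, hg2⟩ := memHardyTwo_and_of_eqOn_add_conj hh hg hf hbdd
  have hdiam : Set.EqOn (fun x : ℝ => ‖f x‖ ^ 2) (fun x => ‖h x + conj (g x)‖ ^ 2)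
      (Set.uIoo (-1) 1) := fun x hx => by
    rw [Set.uIoo_of_le (by norm_num)] at hx
    simp only [hf (ofReal_mem_ball_zero.2 hx)]
  have hcircle : ∫ θ in (0 : ℝ)..2 * π, ‖F θ‖ ^ 2 =
      ∫ θ in (0 : ℝ)..2 * π, ‖H θ + conj (G θ)‖ ^ 2 :=
    intervalIntegral.integral_congr_ae <|
      (hF.ae_eq_add_conj hH hG hf).mono fun θ hθ _ => by rw [hθ]
  constructor
  · refine IntervalIntegrable.congr_uIoo ?_ hdiam.symm
    exact (intervalIntegrable_iff_integrableOn_Ioc_of_le (by norm_num)).2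
      (hh2.memLp_diameter.add hg2.memLp_diameter.star).norm.integrable_sq
  · rw [intervalIntegral.integral_congr_uIoo hdiam, hcircle,
      intervalIntegral_norm_add_conj_sq (by norm_num) hh2.memLp_diameter hg2.memLp_diameter,
      intervalIntegral_norm_add_conj_sq two_pi_pos.le (hh2.memLp_radialLimit hH)
        (hg2.memLp_radialLimit hG), hh2.integral_radialLimit_mul hg2 hH hG]
    have hhle := hh2.two_mul_integral_norm_sq_diameter_le hH
    have hgle := hg2.two_mul_integral_norm_sq_diameter_le hG
    have hhgle := hh2.two_mul_norm_integral_mul_diameter_le hg2 hH hG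
    have hre := re_le_norm (∫ x in (-1 : ℝ)..1, h x * g x)
    have hmean : (2 * π * (h 0 * g 0)).re = 2 * π * (h 0 * g 0).re := by
      exact_mod_cast re_ofReal_mul (2 * π) (h 0 * g 0)
    linarith

end HarmonicHardy

/-- If `f = h + conj g ∈ h²` with `g 0 = 0`, and `F, H, G` are the a.e. radial boundary
values of `f, h, g`, then
`∫_{-1}^{1} |f(x)|² dx ≤ (1/2) ∫₀^{2π} |F(θ)|² dθ + ∫₀^{2π} |H(θ) G(θ)| dθ`. -/
theorem harmonic_riesz_fejer_hg (h g f : ℂ → ℂ) (F H G : ℝ → ℂ)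
    (hh : AnalyticOn ℂ h (Metric.ball 0 1)) (hg : AnalyticOn ℂ g (Metric.ball 0 1))
    (hg0 : g 0 = 0)
    (hf : ∀ z ∈ Metric.ball (0:ℂ) 1, f z = h z + starRingEnd ℂ (g z))
    (hH2 : ∃ C : ℝ, ∀ r : ℝ, 0 ≤ r → r < 1 →
      (∫ θ in (0:ℝ)..(2 * π), ‖f ((r : ℂ) * Complex.exp (θ * Complex.I))‖ ^ 2) ≤ C)
    (hF : ∀ᵐ θ : ℝ, Tendsto (fun r : ℝ => f ((r : ℂ) * Complex.exp (θ * Complex.I)))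
      (nhdsWithin 1 (Set.Iio 1)) (nhds (F θ)))
    (hHlim : ∀ᵐ θ : ℝ, Tendsto (fun r : ℝ => h ((r : ℂ) * Complex.exp (θ * Complex.I)))
      (nhdsWithin 1 (Set.Iio 1)) (nhds (H θ)))
    (hGlim : ∀ᵐ θ : ℝ, Tendsto (fun r : ℝ => g ((r : ℂ) * Complex.exp (θ * Complex.I)))
      (nhdsWithin 1 (Set.Iio 1)) (nhds (G θ))) :
    (∫ x in (-1:ℝ)..1, ‖f (x : ℂ)‖ ^ 2) ≤
      (1 / 2) * (∫ θ in (0:ℝ)..(2 * π), ‖F θ‖ ^ 2) +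
        ∫ θ in (0:ℝ)..(2 * π), ‖H θ * G θ‖ := by
  obtain ⟨C, hC⟩ := hH2
  simp only [← circleMap_zero] at hC hF hHlim hGlim
  have hbdd : BddAbove (circleMeanSq f '' Set.Ioo 0 1) :=
    ⟨C, Set.forall_mem_image.2 fun r hr => hC r hr.1.le hr.2⟩
  simpa [hg0] using (harmonic_riesz_fejer_hg_general hh.differentiableOn hg.differentiableOn hf
    hbdd hF hHlim hGlim).2
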